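/- Assume L/2 ≥ M ≥ r, L ≥ M+1, and π(x|Y) ≥ γ > 0 for all x, Y. Let ε > 0, C > 0 and f : 𝒳^{L+1} → [−C, C]. Let q(e) denote the single-token marginal of the stationary window distribution μ̄ at its last coordinate (so q(e) ≥ γ for all e ∈ 𝒳), and set ȳ(k) = (L−M)^{−1} Σ_{l=M+1}^{L} 1{x_l = e_k}. Define A = E_{X∼p}[ (L−M)^{−1} Σ_{l=M+1}^{L} Σ_{k=1}^{d} ( 1{x_{L+1}=x_l=e_k}/(ȳ(k)+ε) − ȳ(k)·1{x_{L+1}=e_k}/(ȳ(k)+ε) ) · f(X) ] and B = E_{X∼p}[ (L−M)^{−1} Σ_{l=M+1}^{L} ( Σ_{k=1}^{d} 1{x_{L+1}=x_l=e_k}/q(e_k) − 1 ) · f(X) ]. Then |A − B| ≤ 4C·( (1−λ)^{−1/2}·(D₀+1)^{1/4} + 2√M ) / ( L^{1/2}·γ ) + C·γ^{−1}·ε. -/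

import Mathlib

open Finset

/-- Probability of the full sequence `x` (tokens indexed `0,…,T-1`, i.e. `x_1,…,x_T`)
under the `n`-gram Markov chain with parent offsets `r`, transition kernel `pk`,
and initial distribution `init` on the first `R` tokens. -/
noncomputable def ngramProb (d n R T : ℕ) (r : Fin n → ℕ)
    (pk : (Fin n → Fin d) → Fin d → ℝ) (init : (Fin R → Fin d) → ℝ)
    (hRT : R ≤ T) (x : Fin T → Fin d) : ℝ :=
  init (fun i => x ⟨i.1, lt_of_lt_of_le i.2 hRT⟩) *
    ∏ l ∈ (Finset.Ico R T).attach,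
      pk (fun k => x ⟨l.1 - r k, lt_of_le_of_lt (Nat.sub_le _ _) (Finset.mem_Ico.mp l.2).2⟩)
        (x ⟨l.1, (Finset.mem_Ico.mp l.2).2⟩)

/-- The window transition matrix `P_π` on `𝒳^R` of the `n`-gram chain:
`P(Z', Z) = π(z'_R | Z parents) · 1{Z' is the shift of Z}`. -/
noncomputable def windowMatrix (d n R : ℕ) (hR : 0 < R) (r : Fin n → ℕ)
    (hrpos : ∀ k, 0 < r k) (pk : (Fin n → Fin d) → Fin d → ℝ) :
    Matrix (Fin R → Fin d) (Fin R → Fin d) ℝ :=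
  Matrix.of fun Z' Z =>
    if ∀ j : Fin (R - 1),
        Z' ⟨j.1, lt_of_lt_of_le j.2 (Nat.sub_le R 1)⟩ = Z ⟨j.1 + 1, by have := j.2; omega⟩ then
      pk (fun k => Z ⟨R - r k, Nat.sub_lt hR (hrpos k)⟩) (Z' ⟨R - 1, Nat.sub_lt hR Nat.one_pos⟩)
    else 0

/-- The matrix `K - √μ (√μ)ᵀ` where `K = diag(√μ)⁻¹ P_π diag(√μ)`. -/
noncomputable def specA (d n R : ℕ) (hR : 0 < R) (r : Fin n → ℕ) (hrpos : ∀ k, 0 < r k)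
    (pk : (Fin n → Fin d) → Fin d → ℝ) (μ : (Fin R → Fin d) → ℝ) :
    Matrix (Fin R → Fin d) (Fin R → Fin d) ℝ :=
  (Matrix.diagonal fun Z => (Real.sqrt (μ Z))⁻¹) * windowMatrix d n R hR r hrpos pk *
      (Matrix.diagonal fun Z => Real.sqrt (μ Z)) -
    Matrix.vecMulVec (fun Z => Real.sqrt (μ Z)) (fun Z => Real.sqrt (μ Z))

/-- Total variation distance: half the ℓ₁ distance. -/
noncomputable def tvDist {α : Type*} [Fintype α] (p q : α → ℝ) : ℝ :=
  (∑ w, |p w - q w|) / 2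

/-- χ²-divergence `D_{χ²}(p ‖ q) = Σ_ω (p ω - q ω)² / q ω`. -/
noncomputable def chiSq {α : Type*} [Fintype α] (p q : α → ℝ) : ℝ :=
  ∑ w, (p w - q w) ^ 2 / q w

theorem icoLtSucc {M L : ℕ} (l : {m // m ∈ Finset.Ico M L}) : l.1 < L + 1 :=
  Nat.lt_succ_of_lt (Finset.mem_Ico.mp l.2).2

/-- The single-token marginal at the last coordinate of a distribution on `𝒳^{M+1}`. -/
noncomputable def tokenMarg (d M : ℕ) (μb : (Fin (M + 1) → Fin d) → ℝ) (e : Fin d) : ℝ :=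
  ∑ y : Fin (M + 1) → Fin d, if y ⟨M, Nat.lt_succ_self M⟩ = e then μb y else 0

/-!
The smoothed expectation `A` vanishes identically: averaged over `l`, the indicator
`1{x_{L+1} = x_l = e_k}` becomes `ȳ(k) 1{x_{L+1} = e_k}`, so the two terms cancel for every
sequence. In `B` the same average produces `(ȳ(k) - q(e_k)) / q(e_k)` at the last token `e_k`, so by
Jensen's inequality `|B| ≤ (C / γ) √(E ∑ₖ (ȳ(k) - q(e_k))²)`.

The second moment of `ȳ - q` is a double sum of correlations between the times `l ≤ m`. The chain
of windows contracts the `ℓ²(1/μ)` norm of measures of mass zero by the factor `λ`, which bounds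
the sum over `k` of these correlations by `2 λ^(m - l) √(D₀ + 1)`. Summing the geometric series
gives `E ∑ₖ (ȳ(k) - q(e_k))² ≤ 4 √(D₀ + 1) / ((1 - λ) (L - M))`.
-/

section ChiSqGap

open Matrix

variable {Ω : Type*} [Fintype Ω]

/-- Squared norm of the weighted space `ℓ²(1/μ)`, in which `chiSq p μ` is the squared distance
between `p` and `μ`. -/
noncomputable def chiNormSq (μ w : Ω → ℝ) : ℝ := ∑ z, w z ^ 2 / μ z

lemma chiNormSq_nonneg {μ : Ω → ℝ} (hμ : ∀ z, 0 ≤ μ z) (w : Ω → ℝ) : 0 ≤ chiNormSq μ w :=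
  sum_nonneg fun z _ => div_nonneg (sq_nonneg _) (hμ z)

lemma chiSq_eq_chiNormSq (p μ : Ω → ℝ) : chiSq p μ = chiNormSq μ (p - μ) := rfl

/-- Pythagoras: `μ` is a unit vector of `ℓ²(1/μ)` whose inner product with `w` is `∑ z, w z`. -/
lemma chiNormSq_sub_sum_smul {μ : Ω → ℝ} (hμ : ∀ z, 0 < μ z) (hμ1 : ∑ z, μ z = 1) (w : Ω → ℝ) :
    chiNormSq μ (w - (∑ z, w z) • μ) = chiNormSq μ w - (∑ z, w z) ^ 2 := by
  set s := ∑ z, w z with hs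
  have expand (z : Ω) : (w - s • μ) z ^ 2 / μ z = w z ^ 2 / μ z - 2 * s * w z + s ^ 2 * μ z := by
    have := (hμ z).ne'
    simp only [Pi.sub_apply, Pi.smul_apply, smul_eq_mul]
    field_simp
    ring
  simp only [chiNormSq, expand, sum_add_distrib, sum_sub_distrib, ← mul_sum, ← hs, hμ1]
  ring

lemma sum_mul_le_sqrt_mul_sqrt_chiNormSq {μ : Ω → ℝ} (hμ : ∀ z, 0 < μ z) (g w : Ω → ℝ) :
    ∑ z, g z * w z ≤ √(∑ z, g z ^ 2 * μ z) * √(chiNormSq μ w) := by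
  convert Real.sum_mul_le_sqrt_mul_sqrt univ (fun z => g z * √(μ z)) (fun z => w z / √(μ z))
    using 2 with z
  · have := (Real.sqrt_pos.2 (hμ z)).ne'
    field_simp
  · simp only [mul_pow, Real.sq_sqrt (hμ _).le]
  · simp only [chiNormSq, div_pow, Real.sq_sqrt (hμ _).le]

variable [DecidableEq Ω]

/-- The Markov chain with column-stochastic transition matrix `P` has the positive stationary
distribution `μ`, and `P` contracts by the factor `c` the `ℓ²(1/μ)` norm of signed measures of
total mass zero. -/
structure HasChiSqGap (P : Matrix Ω Ω ℝ) (μ : Ω → ℝ) (c : ℝ) : Prop where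
  mem_colStochastic : P ∈ colStochastic ℝ Ω
  pos : ∀ z, 0 < μ z
  sum_eq_one : ∑ z, μ z = 1
  stationary : P *ᵥ μ = μ
  nonneg : 0 ≤ c
  contracts : ∀ w : Ω → ℝ, ∑ z, w z = 0 → chiNormSq μ (P *ᵥ w) ≤ c ^ 2 * chiNormSq μ w

/-- Multiplication by `√μ` is an isometry from `ℓ²` onto `ℓ²(1/μ)` conjugating `K` to `P`, and the
rank-one part vanishes on the vectors corresponding to measures of mass zero. -/
lemma chiNormSq_mulVec_le_of_opNorm_le {P : Matrix Ω Ω ℝ} {μ : Ω → ℝ} {c : ℝ}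
    (hμ : ∀ z, 0 < μ z)
    (hop : ∀ v : Ω → ℝ, √(∑ z, ((diagonal (fun z => (√(μ z))⁻¹) * P * diagonal (fun z => √(μ z)) -
      vecMulVec (fun z => √(μ z)) (fun z => √(μ z))) *ᵥ v) z ^ 2) ≤ c * √(∑ z, v z ^ 2))
    {w : Ω → ℝ} (hw : ∑ z, w z = 0) :
    chiNormSq μ (P *ᵥ w) ≤ c ^ 2 * chiNormSq μ w := by
  have sqrt_ne (z : Ω) : √(μ z) ≠ 0 := (Real.sqrt_pos.2 (hμ z)).ne'
  have conj (z : Ω) : ((diagonal (fun z => (√(μ z))⁻¹) * P * diagonal (fun z => √(μ z)) -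
      vecMulVec (fun z => √(μ z)) (fun z => √(μ z))) *ᵥ fun z => w z / √(μ z)) z =
      (P *ᵥ w) z / √(μ z) := by
    have term (y : Ω) : ((√(μ z))⁻¹ * P z y * √(μ y) - √(μ z) * √(μ y)) * (w y / √(μ y)) =
        P z y * w y / √(μ z) - √(μ z) * w y := by
      have := sqrt_ne y
      have := sqrt_ne z
      field_simp
    simp only [mulVec, dotProduct, Matrix.sub_apply, mul_diagonal, diagonal_mul, vecMulVec_apply,
      term, sum_sub_distrib, ← mul_sum, hw, mul_zero, sub_zero, sum_div]
  have h := hop fun z => w z / √(μ z)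
  simp only [conj, div_pow, Real.sq_sqrt (hμ _).le] at h
  change √(chiNormSq μ (P *ᵥ w)) ≤ c * √(chiNormSq μ w) at h
  have h_sq := pow_le_pow_left₀ (Real.sqrt_nonneg _) h 2
  have nonneg := chiNormSq_nonneg fun z => (hμ z).le
  rwa [mul_pow, Real.sq_sqrt (nonneg (P *ᵥ w)), Real.sq_sqrt (nonneg w)] at h_sq

namespace HasChiSqGap

variable {P : Matrix Ω Ω ℝ} {μ : Ω → ℝ} {c : ℝ}

lemma sum_mulVec (h : HasChiSqGap P μ c) (w : Ω → ℝ) : ∑ z, (P *ᵥ w) z = ∑ z, w z :=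
  sum_mulVec_of_mem_colStochastic h.mem_colStochastic

protected lemma pow (h : HasChiSqGap P μ c) (t : ℕ) : HasChiSqGap (P ^ t) μ (c ^ t) := by
  induction t with
  | zero =>
    exact ⟨by simp, h.pos, h.sum_eq_one, by simp, by simp, fun w _ => by simp⟩
  | succ t ih =>
    refine ⟨pow_mem h.mem_colStochastic _, h.pos, h.sum_eq_one, ?_, pow_nonneg h.nonneg _,
      fun w hw => ?_⟩
    · rw [pow_succ', ← mulVec_mulVec, ih.stationary, h.stationary]
    calc chiNormSq μ ((P ^ (t + 1)) *ᵥ w) = chiNormSq μ (P *ᵥ (P ^ t *ᵥ w)) := by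
          rw [mulVec_mulVec, ← pow_succ']
      _ ≤ c ^ 2 * chiNormSq μ (P ^ t *ᵥ w) := h.contracts _ ((ih.sum_mulVec w).trans hw)
      _ ≤ c ^ 2 * ((c ^ t) ^ 2 * chiNormSq μ w) := by gcongr; exact ih.contracts w hw
      _ = (c ^ (t + 1)) ^ 2 * chiNormSq μ w := by ring

lemma chiNormSq_mulVec_sub_le (h : HasChiSqGap P μ c) (w : Ω → ℝ) :
    chiNormSq μ (P *ᵥ w - (∑ z, w z) • μ) ≤ c ^ 2 * chiNormSq μ (w - (∑ z, w z) • μ) := by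
  have centred : ∑ z, (w - (∑ z, w z) • μ) z = 0 := by
    simp [← mul_sum, h.sum_eq_one]
  simpa only [mulVec_sub, mulVec_smul, h.stationary] using h.contracts _ centred

lemma chiNormSq_mulVec_le (h : HasChiSqGap P μ c) (hc : c ≤ 1) {p : Ω → ℝ} (hp : ∑ z, p z = 1) :
    chiNormSq μ (P *ᵥ p) ≤ chiSq p μ + 1 := by
  have decomp := chiNormSq_sub_sum_smul h.pos h.sum_eq_one (P *ᵥ p)
  have contr := h.chiNormSq_mulVec_sub_le p
  rw [h.sum_mulVec, hp, one_smul, one_pow] at decomp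
  rw [hp, one_smul, ← chiSq_eq_chiNormSq p] at contr
  have chiSq_nonneg : 0 ≤ chiSq p μ := chiNormSq_nonneg (fun z => (h.pos z).le) _
  linarith [mul_le_of_le_one_left chiSq_nonneg (pow_le_one₀ h.nonneg hc : c ^ 2 ≤ 1)]

lemma sum_mul_mulVec_le (h : HasChiSqGap P μ c) {g : Ω → ℝ} (hg : ∑ z, g z * μ z = 0)
    (w : Ω → ℝ) :
    ∑ z, g z * (P *ᵥ w) z ≤ c * (√(∑ z, g z ^ 2 * μ z) * √(chiNormSq μ w)) := by
  have sqrt_le : √(chiNormSq μ (P *ᵥ w - (∑ z, w z) • μ)) ≤ c * √(chiNormSq μ w) := by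
    rw [← Real.sqrt_sq h.nonneg, ← Real.sqrt_mul (sq_nonneg c)]
    refine Real.sqrt_le_sqrt ((h.chiNormSq_mulVec_sub_le w).trans ?_)
    rw [chiNormSq_sub_sum_smul h.pos h.sum_eq_one]
    gcongr
    exact sub_le_self _ (sq_nonneg _)
  calc ∑ z, g z * (P *ᵥ w) z = ∑ z, g z * (P *ᵥ w - (∑ z, w z) • μ) z := by
        simp only [Pi.sub_apply, Pi.smul_apply, smul_eq_mul, mul_sub, sum_sub_distrib,
          mul_left_comm _ (∑ z, w z), ← mul_sum, hg, mul_zero, sub_zero]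
    _ ≤ √(∑ z, g z ^ 2 * μ z) * √(chiNormSq μ (P *ᵥ w - (∑ z, w z) • μ)) :=
        sum_mul_le_sqrt_mul_sqrt_chiNormSq h.pos _ _
    _ ≤ √(∑ z, g z ^ 2 * μ z) * (c * √(chiNormSq μ w)) := by gcongr
    _ = _ := by ring

end HasChiSqGap

end ChiSqGap

section Observables

variable {Ω α : Type*} [Fintype Ω] [DecidableEq α]

/-- Image of the signed measure with density `w` under `φ`. -/
def pushforward (φ : Ω → α) (w : Ω → ℝ) (k : α) : ℝ := ∑ z, if φ z = k then w z else 0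

lemma pushforward_nonneg (φ : Ω → α) {w : Ω → ℝ} (hw : ∀ z, 0 ≤ w z) (k : α) :
    0 ≤ pushforward φ w k :=
  sum_nonneg fun z _ => ite_nonneg (hw z) le_rfl

lemma pushforward_mul_comp (φ : Ω → α) (g : α → ℝ) (w : Ω → ℝ) (k : α) :
    pushforward φ (fun z => g (φ z) * w z) k = g k * pushforward φ w k := by
  simp only [pushforward, mul_sum]
  refine sum_congr rfl fun z _ => ?_
  split_ifs with hz
  · rw [hz]
  · rw [mul_zero]

variable [Fintype α]

lemma sum_mul_pushforward (φ : Ω → α) (g : α → ℝ) (w : Ω → ℝ) :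
    ∑ k, g k * pushforward φ w k = ∑ z, g (φ z) * w z := by
  simp only [pushforward, mul_sum]
  rw [sum_comm]
  simp

lemma sum_pushforward (φ : Ω → α) (w : Ω → ℝ) : ∑ k, pushforward φ w k = ∑ z, w z := by
  simpa using sum_mul_pushforward φ 1 w

lemma pushforward_pushforward {β : Type*} [DecidableEq β] (ψ : α → β) (φ : Ω → α) (w : Ω → ℝ) :
    pushforward ψ (pushforward φ w) = pushforward (ψ ∘ φ) w := by
  ext k
  simpa [pushforward] using sum_mul_pushforward φ (fun a => if ψ a = k then 1 else 0) w

end Observables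

section CenteredIndicator

variable {α : Type*} [DecidableEq α]

/-- Indicator of the symbol `k` evaluated at `a`, centred by the frequency `q k`. -/
def centeredIndicator (q : α → ℝ) (k a : α) : ℝ := (if a = k then 1 else 0) - q k

lemma sum_centeredIndicator_sq_le_two [Fintype α] {q : α → ℝ} (hq0 : ∀ k, 0 ≤ q k)
    (hq1 : ∑ k, q k = 1) (a : α) : ∑ k, centeredIndicator q k a ^ 2 ≤ 2 := by
  have hq_le (k : α) : q k ≤ 1 := hq1 ▸ single_le_sum (fun i _ => hq0 i) (mem_univ k)
  have term_le (k : α) : centeredIndicator q k a ^ 2 ≤ (if a = k then 1 else 0) + q k := by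
    have := hq0 k
    have := hq_le k
    unfold centeredIndicator
    split_ifs <;> nlinarith
  calc ∑ k, centeredIndicator q k a ^ 2 ≤ ∑ k, ((if a = k then 1 else 0) + q k) :=
        sum_le_sum fun k _ => term_le k
    _ = 2 := by rw [sum_add_distrib, hq1, sum_ite_eq, if_pos (mem_univ a), one_add_one_eq_two]

variable {Ω : Type*} [Fintype Ω]

lemma sum_centeredIndicator_pushforward_mul {μ : Ω → ℝ} (hμ1 : ∑ z, μ z = 1) (φ : Ω → α) (k : α) :
    ∑ z, centeredIndicator (pushforward φ μ) k (φ z) * μ z = 0 := by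
  simp only [centeredIndicator, sub_mul, sum_sub_distrib, ← mul_sum, hμ1, mul_one, ite_mul, one_mul,
    zero_mul]
  exact sub_self _

variable [Fintype α]

lemma sum_sum_centeredIndicator_sq_mul_le {q : α → ℝ} (hq0 : ∀ k, 0 ≤ q k) (hq1 : ∑ k, q k = 1)
    (φ : Ω → α) {ν : Ω → ℝ} (hν : ∀ z, 0 ≤ ν z) :
    ∑ k, ∑ z, centeredIndicator q k (φ z) ^ 2 * ν z ≤ 2 * ∑ z, ν z := by
  rw [sum_comm, mul_sum]
  simp only [← sum_mul]
  exact sum_le_sum fun z _ =>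
    mul_le_mul_of_nonneg_right (sum_centeredIndicator_sq_le_two hq0 hq1 (φ z)) (hν z)

variable [DecidableEq Ω]

/-- Cauchy–Schwarz is applied over the symbols `k` as well, so that the bound does not depend on the
size of the alphabet. -/
lemma HasChiSqGap.sum_correlation_le {P : Matrix Ω Ω ℝ} {μ : Ω → ℝ} {c : ℝ}
    (h : HasChiSqGap P μ c) (φ : Ω → α) (w : Ω → ℝ) :
    ∑ k, ∑ z, centeredIndicator (pushforward φ μ) k (φ z) *
        P.mulVec (fun z => centeredIndicator (pushforward φ μ) k (φ z) * w z) z ≤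
      c * (2 * √(chiNormSq μ w)) := by
  set ξ := fun k z => centeredIndicator (pushforward φ μ) k (φ z)
  have energy_le {ν : Ω → ℝ} (hν : ∀ z, 0 ≤ ν z) : ∑ k, ∑ z, ξ k z ^ 2 * ν z ≤ 2 * ∑ z, ν z :=
    sum_sum_centeredIndicator_sq_mul_le (pushforward_nonneg φ fun z => (h.pos z).le)
      ((sum_pushforward φ μ).trans h.sum_eq_one) φ hν
  have static_le : ∑ k, ∑ z, ξ k z ^ 2 * μ z ≤ 2 := by
    simpa only [h.sum_eq_one, mul_one] using energy_le fun z => (h.pos z).le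
  have dynamic_le : ∑ k, chiNormSq μ (fun z => ξ k z * w z) ≤ 2 * chiNormSq μ w := by
    simpa only [chiNormSq, mul_pow, mul_div_assoc] using
      energy_le fun z => div_nonneg (sq_nonneg (w z)) (h.pos z).le
  calc ∑ k, ∑ z, ξ k z * P.mulVec (fun z => ξ k z * w z) z
    _ ≤ ∑ k, c * (√(∑ z, ξ k z ^ 2 * μ z) * √(chiNormSq μ fun z => ξ k z * w z)) :=
        sum_le_sum fun k _ =>
          h.sum_mul_mulVec_le (sum_centeredIndicator_pushforward_mul h.sum_eq_one φ k) _
    _ = c * ∑ k, √(∑ z, ξ k z ^ 2 * μ z) * √(chiNormSq μ fun z => ξ k z * w z) :=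
        (mul_sum _ _ _).symm
    _ ≤ c * (√(∑ k, ∑ z, ξ k z ^ 2 * μ z) * √(∑ k, chiNormSq μ fun z => ξ k z * w z)) := by
        gcongr
        · exact h.nonneg
        · exact Real.sum_sqrt_mul_sqrt_le _
            (fun k => sum_nonneg fun z _ => mul_nonneg (sq_nonneg _) (h.pos z).le)
            (fun k => chiNormSq_nonneg (fun z => (h.pos z).le) _)
    _ ≤ c * (√2 * √(2 * chiNormSq μ w)) := by
        have := h.nonneg
        gcongr
    _ = c * (2 * √(chiNormSq μ w)) := by
        rw [Real.sqrt_mul zero_le_two, ← mul_assoc √2, Real.mul_self_sqrt zero_le_two]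

end CenteredIndicator

section EmpiricalFrequency

variable {ι α : Type*} [DecidableEq α]

/-- Relative frequency of the symbol `k` among the values `b l` at the times `l ∈ s`. -/
noncomputable def empFreq (s : Finset ι) (b : ι → α) (k : α) : ℝ :=
  (∑ l ∈ s, if b l = k then 1 else 0) / #s

lemma empFreq_sub {s : Finset ι} (hs : s.Nonempty) (b : ι → α) (q : α → ℝ) (k : α) :
    empFreq s b k - q k = (∑ l ∈ s, centeredIndicator q k (b l)) / #s := by
  have : (#s : ℝ) ≠ 0 := Nat.cast_ne_zero.2 hs.card_ne_zero
  simp only [empFreq, centeredIndicator, sum_sub_distrib, sum_const, nsmul_eq_mul]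
  field_simp

variable [Fintype α]

/-- The mean over `s` of `1{a = b l = k}` is `empFreq s b k * 1{a = k}`. -/
lemma sum_sum_indicator_sub_empFreq_div_eq_zero (s : Finset ι) (b : ι → α) (a : α) (v : α → ℝ) :
    ∑ l ∈ s, ∑ k, ((if a = k ∧ b l = k then (1 : ℝ) else 0) / v k -
      empFreq s b k * (if a = k then 1 else 0) / v k) = 0 := by
  rw [sum_comm]
  refine sum_eq_zero fun k _ => ?_
  rcases s.eq_empty_or_nonempty with rfl | hs
  · exact sum_empty
  have card_ne : (#s : ℝ) ≠ 0 := Nat.cast_ne_zero.2 hs.card_ne_zero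
  rw [sum_sub_distrib, ← sum_div, sum_const, nsmul_eq_mul, empFreq]
  by_cases hk : a = k
  · simp only [hk, true_and, if_true]
    field_simp
    ring
  · simp [hk]

lemma sum_likelihoodRatio_sub_one_div_card {s : Finset ι} (hs : s.Nonempty) (b : ι → α) (a : α)
    {q : α → ℝ} (hqa : q a ≠ 0) :
    (∑ l ∈ s, (∑ k, (if a = k ∧ b l = k then (1 : ℝ) else 0) / q k - 1)) / #s =
      (empFreq s b a - q a) / q a := by
  have card_ne : (#s : ℝ) ≠ 0 := Nat.cast_ne_zero.2 hs.card_ne_zero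
  have collapse (l : ι) : ∑ k, (if a = k ∧ b l = k then (1 : ℝ) else 0) / q k =
      (if b l = a then 1 else 0) / q a := by
    simp [ite_and, ite_div]
  simp only [collapse, sum_sub_distrib, ← sum_div, sum_const, nsmul_eq_mul, empFreq]
  field_simp

lemma abs_sum_likelihoodRatio_sub_one_mul_div_card_le {s : Finset ι} (hs : s.Nonempty) (b : ι → α)
    (a : α) {q : α → ℝ} {γ C v : ℝ} (hγ : 0 < γ) (hq : γ ≤ q a) (hv : |v| ≤ C) :
    |(∑ l ∈ s, (∑ k, (if a = k ∧ b l = k then (1 : ℝ) else 0) / q k - 1) * v) / #s| ≤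
      C / γ * √(∑ k, (empFreq s b k - q k) ^ 2) := by
  have hqa : 0 < q a := hγ.trans_le hq
  have deviation_le : |empFreq s b a - q a| ≤ √(∑ k, (empFreq s b k - q k) ^ 2) :=
    Real.abs_le_sqrt <| single_le_sum (f := fun k => (empFreq s b k - q k) ^ 2)
      (fun k _ => sq_nonneg _) (mem_univ a)
  rw [← sum_mul, mul_div_right_comm, sum_likelihoodRatio_sub_one_div_card hs b a hqa.ne', abs_mul,
    abs_div, abs_of_pos hqa]
  calc |empFreq s b a - q a| / q a * |v| ≤ √(∑ k, (empFreq s b k - q k) ^ 2) / γ * C := by gcongr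
    _ = C / γ * √(∑ k, (empFreq s b k - q k) ^ 2) := by ring

lemma sum_pow_dist_le {c : ℝ} (hc0 : 0 ≤ c) (hc1 : c < 1) (s : Finset ℕ) (l : ℕ) :
    ∑ m ∈ s, c ^ Nat.dist l m ≤ 2 / (1 - c) := by
  obtain ⟨N, hN⟩ := s.exists_nat_subset_range
  have geom_le (n : ℕ) : ∑ i ∈ range n, c ^ i ≤ 1 / (1 - c) := by
    simpa only [range_eq_Ico, pow_zero] using geom_sum_Ico_le_of_lt_one (m := 0) (n := n) hc0 hc1
  have past_le : ∑ m ∈ range l, c ^ Nat.dist l m ≤ 1 / (1 - c) := by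
    rw [← sum_range_reflect]
    refine (sum_le_sum fun i hi => ?_).trans (geom_le l)
    have := mem_range.1 hi
    exact pow_le_pow_of_le_one hc0 hc1.le (by unfold Nat.dist; omega)
  have future_le : ∑ i ∈ range N, c ^ Nat.dist l (l + i) ≤ 1 / (1 - c) := by
    simpa [Nat.dist] using geom_le N
  calc ∑ m ∈ s, c ^ Nat.dist l m ≤ ∑ m ∈ range (l + N), c ^ Nat.dist l m :=
        sum_le_sum_of_subset_of_nonneg (hN.trans (range_mono (Nat.le_add_left N l)))
          fun _ _ _ => pow_nonneg hc0 _
    _ = ∑ m ∈ range l, c ^ Nat.dist l m + ∑ i ∈ range N, c ^ Nat.dist l (l + i) :=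
        sum_range_add _ l N
    _ ≤ 1 / (1 - c) + 1 / (1 - c) := add_le_add past_le future_le
    _ = 2 / (1 - c) := by ring

variable {Ω : Type*} [Fintype Ω]

lemma sum_mul_sum_empFreq_sub_sq {s : Finset ι} (hs : s.Nonempty) (X : Ω → ι → α) (q : α → ℝ)
    (p : Ω → ℝ) :
    ∑ x, p x * ∑ k, (empFreq s (X x) k - q k) ^ 2 =
      (∑ l ∈ s, ∑ m ∈ s, ∑ k, ∑ x,
        p x * (centeredIndicator q k (X x l) * centeredIndicator q k (X x m))) / #s ^ 2 := by
  have square (x : Ω) (k : α) : (empFreq s (X x) k - q k) ^ 2 =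
      (∑ l ∈ s, ∑ m ∈ s, centeredIndicator q k (X x l) * centeredIndicator q k (X x m)) /
        #s ^ 2 := by
    rw [empFreq_sub hs, div_pow, sq (∑ l ∈ s, _), sum_mul_sum]
  simp only [square, ← sum_div, ← mul_div_assoc, mul_sum]
  congr 1
  rw [sum_comm]
  simp only [sum_comm (s := (univ : Finset Ω)), sum_comm (s := (univ : Finset α)) (t := s)]

lemma sum_mul_sum_empFreq_sub_sq_le {s : Finset ℕ} (hs : s.Nonempty) (X : Ω → s → α) (q : α → ℝ)
    (p : Ω → ℝ) {c D : ℝ} (hc0 : 0 ≤ c) (hc1 : c < 1) (hD : 0 ≤ D)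
    (decay : ∀ l m : s, l ≤ m → ∑ k, ∑ x,
      p x * (centeredIndicator q k (X x l) * centeredIndicator q k (X x m)) ≤
        c ^ (m.1 - l.1) * D) :
    ∑ x, p x * ∑ k, (empFreq s.attach (X x) k - q k) ^ 2 ≤ 2 * D / ((1 - c) * #s) := by
  have decay_dist (l m : s) : ∑ k, ∑ x,
      p x * (centeredIndicator q k (X x l) * centeredIndicator q k (X x m)) ≤
        c ^ Nat.dist l m * D := by
    rcases le_total l m with hlm | hml
    · simpa only [Nat.dist_eq_sub_of_le (Subtype.coe_le_coe.2 hlm)] using decay l m hlm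
    · simpa only [Nat.dist_eq_sub_of_le_right (Subtype.coe_le_coe.2 hml), mul_comm] using
        decay m l hml
  rw [sum_mul_sum_empFreq_sub_sq (attach_nonempty_iff.2 hs), card_attach]
  have sum_dist (l : s) : ∑ m ∈ s.attach, c ^ Nat.dist l m = ∑ m ∈ s, c ^ Nat.dist l m :=
    sum_attach s fun m => c ^ Nat.dist l m
  calc _ ≤ (∑ l ∈ s.attach, ∑ m ∈ s.attach, c ^ Nat.dist l m * D) / #s ^ 2 := by
        gcongr with l _ m _
        exact decay_dist l m
    _ = (∑ l ∈ s.attach, (∑ m ∈ s, c ^ Nat.dist l m) * D) / #s ^ 2 := by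
        simp only [← sum_mul, sum_dist]
    _ ≤ (∑ l ∈ s.attach, 2 / (1 - c) * D) / #s ^ 2 := by
        gcongr with l
        exact sum_pow_dist_le hc0 hc1 s l
    _ = 2 * D / ((1 - c) * #s) := by
        have : 1 - c ≠ 0 := (sub_pos.2 hc1).ne'
        rw [sum_const, card_attach, nsmul_eq_mul]
        field_simp

lemma sum_mul_sqrt_le_sqrt_sum_mul {p : Ω → ℝ} (hp0 : ∀ x, 0 ≤ p x) (hp1 : ∑ x, p x = 1)
    {F : Ω → ℝ} (hF : ∀ x, 0 ≤ F x) : ∑ x, p x * √(F x) ≤ √(∑ x, p x * F x) :=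
  Real.strictConcaveOn_sqrt.concaveOn.le_map_sum (fun x _ => hp0 x) hp1 fun x _ => hF x

lemma abs_sum_mul_sum_likelihoodRatio_sub_one_le {s : Finset ι} (hs : s.Nonempty) {p : Ω → ℝ}
    (hp0 : ∀ x, 0 ≤ p x) (hp1 : ∑ x, p x = 1) (a : Ω → α) (X : Ω → ι → α) {q : α → ℝ}
    {γ C : ℝ} (hγ : 0 < γ) (hC : 0 ≤ C) (hq : ∀ k, γ ≤ q k) {f : Ω → ℝ} (hf : ∀ x, |f x| ≤ C) :
    |∑ x, p x * ((∑ l ∈ s, (∑ k, (if a x = k ∧ X x l = k then (1 : ℝ) else 0) / q k - 1) * f x) /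
      #s)| ≤ C / γ * √(∑ x, p x * ∑ k, (empFreq s (X x) k - q k) ^ 2) :=
  calc _ ≤ ∑ x, |p x * ((∑ l ∈ s,
        (∑ k, (if a x = k ∧ X x l = k then (1 : ℝ) else 0) / q k - 1) * f x) / #s)| :=
        abs_sum_le_sum_abs _ _
    _ ≤ ∑ x, p x * (C / γ * √(∑ k, (empFreq s (X x) k - q k) ^ 2)) := by
        refine sum_le_sum fun x _ => ?_
        rw [abs_mul, abs_of_nonneg (hp0 x)]
        exact mul_le_mul_of_nonneg_left
          (abs_sum_likelihoodRatio_sub_one_mul_div_card_le hs _ _ hγ (hq _) (hf x)) (hp0 x)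
    _ = C / γ * ∑ x, p x * √(∑ k, (empFreq s (X x) k - q k) ^ 2) := by
        simp only [mul_sum, mul_left_comm]
    _ ≤ C / γ * √(∑ x, p x * ∑ k, (empFreq s (X x) k - q k) ^ 2) := by
        gcongr
        exact sum_mul_sqrt_le_sqrt_sum_mul hp0 hp1 fun x => sum_nonneg fun k _ => sq_nonneg _

end EmpiricalFrequency

section NGramChain

open Matrix

variable {d T : ℕ}

/-- The most recent `R` tokens of a sequence of length `T`. -/
def lastWindow {R : ℕ} (hRT : R ≤ T) (x : Fin T → Fin d) : Fin R → Fin d :=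
  fun i => x ⟨T - R + i, by omega⟩

/-- The most recent token of a nonempty sequence. -/
def lastToken (hT : 0 < T) (x : Fin T → Fin d) : Fin d := x ⟨T - 1, Nat.sub_lt hT Nat.one_pos⟩

/-- The tokens on which the token following `x` depends: those at the distances `r k` before it. -/
def parentTokens {n : ℕ} {r : Fin n → ℕ} (hT : 0 < T) (hrpos : ∀ k, 0 < r k)
    (x : Fin T → Fin d) (k : Fin n) : Fin d :=
  x ⟨T - r k, Nat.sub_lt hT (hrpos k)⟩

lemma lastWindow_self (Z : Fin T → Fin d) : lastWindow le_rfl Z = Z := by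
  ext i
  simp [lastWindow]

lemma lastToken_lastWindow {R : ℕ} (hR : 0 < R) (hRT : R ≤ T) (x : Fin T → Fin d) :
    lastToken hR (lastWindow hRT x) = lastToken (hR.trans_le hRT) x :=
  congrArg x (Fin.ext (show T - R + (R - 1) = T - 1 by omega))

lemma lastWindow_snoc_eq_iff {R : ℕ} (hR : 0 < R) (hRT : R ≤ T) (x : Fin T → Fin d) (e : Fin d)
    (Z : Fin R → Fin d) :
    lastWindow (hRT.trans T.le_succ) (Fin.snoc x e : Fin (T + 1) → Fin d) = Z ↔
      (∀ j : Fin (R - 1), Z ⟨j, j.2.trans_le (Nat.sub_le R 1)⟩ =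
        lastWindow hRT x ⟨j + 1, Nat.add_lt_of_lt_sub j.2⟩) ∧ e = lastToken hR Z := by
  have shift (j : Fin (R - 1)) : lastWindow (hRT.trans T.le_succ)
      (Fin.snoc x e : Fin (T + 1) → Fin d) ⟨j, j.2.trans_le (Nat.sub_le R 1)⟩ =
        lastWindow hRT x ⟨j + 1, Nat.add_lt_of_lt_sub j.2⟩ := by
    have h_lt : T + 1 - R + j < T := by omega
    simp only [lastWindow, Fin.snoc, h_lt, dif_pos, cast_eq]
    exact congrArg x (Fin.ext (show T + 1 - R + j = T - R + (j + 1) by omega))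
  have newest : lastToken hR (lastWindow (hRT.trans T.le_succ)
      (Fin.snoc x e : Fin (T + 1) → Fin d)) = e := by
    rw [lastToken_lastWindow]
    exact Fin.snoc_last (α := fun _ => Fin d) e x
  constructor
  · rintro rfl
    exact ⟨shift, newest.symm⟩
  · rintro ⟨old, rfl⟩
    ext1 i
    by_cases hi : i.1 < R - 1
    · exact (shift ⟨i, hi⟩).trans (old ⟨i, hi⟩).symm
    · obtain rfl : i = ⟨R - 1, Nat.sub_lt hR Nat.one_pos⟩ := Fin.ext (by simp only; omega)
      exact newest

lemma prod_attach_Ico_succ_top {M : Type*} [CommMonoid M] {a b : ℕ} (hab : a ≤ b)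
    (f : Ico a (b + 1) → M) :
    ∏ l ∈ (Ico a (b + 1)).attach, f l =
      (∏ l ∈ (Ico a b).attach, f ⟨l, Ico_subset_Ico_right b.le_succ l.2⟩) *
        f ⟨b, mem_Ico.2 ⟨hab, b.lt_succ_self⟩⟩ := by
  obtain ⟨g, hg⟩ : ∃ g : ℕ → M, ∀ l, f l = g l :=
    ⟨fun l => if hl : l ∈ Ico a (b + 1) then f ⟨l, hl⟩ else 1, fun l => by simp⟩
  simp only [hg]
  rw [prod_attach _ g, prod_attach _ g, prod_Ico_succ_top hab]

variable {n R : ℕ} {r : Fin n → ℕ} {pk : (Fin n → Fin d) → Fin d → ℝ}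
  {init : (Fin R → Fin d) → ℝ}

lemma ngramProb_self (Z : Fin R → Fin d) : ngramProb d n R R r pk init le_rfl Z = init Z := by
  rw [ngramProb, attach_eq_empty_iff.2 (Ico_self R), prod_empty, mul_one]

lemma ngramProb_snoc (hR : 0 < R) (hrpos : ∀ k, 0 < r k) (hRT : R ≤ T) (x : Fin T → Fin d)
    (e : Fin d) :
    ngramProb d n R (T + 1) r pk init (hRT.trans T.le_succ) (Fin.snoc x e) =
      ngramProb d n R T r pk init hRT x * pk (parentTokens (hR.trans_le hRT) hrpos x) e := by
  have snoc_of_lt {i : ℕ} (hi : i < T) :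
      (Fin.snoc x e : Fin (T + 1) → Fin d) ⟨i, hi.trans T.lt_succ_self⟩ = x ⟨i, hi⟩ :=
    Fin.snoc_castSucc (α := fun _ => Fin d) e x ⟨i, hi⟩
  have snoc_top : (Fin.snoc x e : Fin (T + 1) → Fin d) ⟨T, T.lt_succ_self⟩ = e :=
    Fin.snoc_last (α := fun _ => Fin d) e x
  rw [ngramProb, prod_attach_Ico_succ_top hRT, ← mul_assoc]
  refine congrArg₂ _ (congrArg₂ _ ?_ (prod_congr rfl fun l _ => ?_)) ?_
  · exact congrArg init (funext fun i => snoc_of_lt _)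
  · exact congrArg₂ pk (funext fun k => snoc_of_lt _) (snoc_of_lt _)
  · exact congrArg₂ pk (funext fun k => snoc_of_lt _) snoc_top

lemma sum_ngramProb_succ_mul (hR : 0 < R) (hrpos : ∀ k, 0 < r k) (hRT : R ≤ T)
    (F : (Fin (T + 1) → Fin d) → ℝ) :
    ∑ y, ngramProb d n R (T + 1) r pk init (hRT.trans T.le_succ) y * F y =
      ∑ x, ngramProb d n R T r pk init hRT x *
        ∑ e, pk (parentTokens (hR.trans_le hRT) hrpos x) e * F (Fin.snoc x e) := by
  rw [← (Fin.snocEquiv fun _ : Fin (T + 1) => Fin d).sum_comp, Fintype.sum_prod_type_right]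
  refine sum_congr rfl fun x _ => ?_
  rw [mul_sum]
  refine sum_congr rfl fun e _ => ?_
  rw [← mul_assoc, ← ngramProb_snoc hR hrpos hRT]
  rfl

lemma windowMatrix_apply_lastWindow (hR : 0 < R) (hrpos : ∀ k, 0 < r k) (hrR : ∀ k, r k ≤ R)
    (hRT : R ≤ T) (x : Fin T → Fin d) (Z : Fin R → Fin d) :
    windowMatrix d n R hR r hrpos pk Z (lastWindow hRT x) =
      ∑ e, pk (parentTokens (hR.trans_le hRT) hrpos x) e *
        if lastWindow (hRT.trans T.le_succ) (Fin.snoc x e : Fin (T + 1) → Fin d) = Z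
          then 1 else 0 := by
  have parents (k : Fin n) : lastWindow hRT x ⟨R - r k, Nat.sub_lt hR (hrpos k)⟩ =
      parentTokens (hR.trans_le hRT) hrpos x k := by
    have := hrR k
    exact congrArg x (Fin.ext (show T - R + (R - r k) = T - r k by omega))
  simp only [lastWindow_snoc_eq_iff hR hRT, windowMatrix, of_apply, parents, ite_and, mul_ite,
    mul_one, mul_zero]
  split_ifs
  · simp only [sum_ite_eq', mem_univ, if_true]
    rfl
  · exact sum_const_zero.symm

lemma windowMatrix_mem_colStochastic (hR : 0 < R) (hrpos : ∀ k, 0 < r k) (hrR : ∀ k, r k ≤ R)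
    (hpk0 : ∀ Y e, 0 ≤ pk Y e) (hpk1 : ∀ Y, ∑ e, pk Y e = 1) :
    windowMatrix d n R hR r hrpos pk ∈ colStochastic ℝ (Fin R → Fin d) := by
  refine mem_colStochastic_iff_sum.2 ⟨fun Z' Z => ite_nonneg (hpk0 _ _) le_rfl, fun Z => ?_⟩
  rw [← lastWindow_self Z]
  simp only [windowMatrix_apply_lastWindow hR hrpos hrR]
  rw [sum_comm]
  simp [hpk1]

/-- Law of the last `R` tokens under the signed measure with density `F` with respect to the law
of the first `T` tokens of the chain. -/
noncomputable def windowLaw (r : Fin n → ℕ) (pk : (Fin n → Fin d) → Fin d → ℝ)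
    (init : (Fin R → Fin d) → ℝ) (hRT : R ≤ T) (F : (Fin T → Fin d) → ℝ) : (Fin R → Fin d) → ℝ :=
  pushforward (lastWindow hRT) fun x => ngramProb d n R T r pk init hRT x * F x

lemma sum_windowLaw (hRT : R ≤ T) (F : (Fin T → Fin d) → ℝ) :
    ∑ Z, windowLaw r pk init hRT F Z = ∑ x, ngramProb d n R T r pk init hRT x * F x :=
  sum_pushforward _ _

lemma windowLaw_self : windowLaw r pk init le_rfl 1 = init := by
  ext Z
  simp [windowLaw, pushforward, lastWindow_self, ngramProb_self]

lemma windowLaw_succ (hR : 0 < R) (hrpos : ∀ k, 0 < r k) (hrR : ∀ k, r k ≤ R) (hRT : R ≤ T)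
    (F : (Fin T → Fin d) → ℝ) :
    windowLaw r pk init (hRT.trans T.le_succ) (fun y => F (Fin.init y)) =
      windowMatrix d n R hR r hrpos pk *ᵥ windowLaw r pk init hRT F := by
  ext Z
  calc windowLaw r pk init (hRT.trans T.le_succ) (fun y => F (Fin.init y)) Z
    _ = ∑ y, ngramProb d n R (T + 1) r pk init (hRT.trans T.le_succ) y *
          (F (Fin.init y) * if lastWindow (hRT.trans T.le_succ) y = Z then 1 else 0) := by
        simp only [windowLaw, pushforward, mul_ite, mul_one, mul_zero]
    _ = ∑ x, windowMatrix d n R hR r hrpos pk Z (lastWindow hRT x) *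
          (ngramProb d n R T r pk init hRT x * F x) := by
        rw [sum_ngramProb_succ_mul hR hrpos hRT]
        refine sum_congr rfl fun x _ => ?_
        rw [windowMatrix_apply_lastWindow hR hrpos hrR hRT]
        simp only [Fin.init_snoc, mul_left_comm _ (F x), ← mul_sum]
        ring
    _ = (windowMatrix d n R hR r hrpos pk *ᵥ windowLaw r pk init hRT F) Z :=
        (sum_mul_pushforward _ _ _).symm

lemma windowLaw_take (hR : 0 < R) (hrpos : ∀ k, 0 < r k) (hrR : ∀ k, r k ≤ R) (hRT : R ≤ T)
    {T' : ℕ} (hT : T ≤ T') (F : (Fin T → Fin d) → ℝ) :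
    windowLaw r pk init (hRT.trans hT) (fun y => F (Fin.take T hT y)) =
      windowMatrix d n R hR r hrpos pk ^ (T' - T) *ᵥ windowLaw r pk init hRT F := by
  induction T', hT using Nat.le_induction with
  | base => simp
  | succ T' hT ih =>
    rw [Nat.succ_sub hT, pow_succ', ← mulVec_mulVec, ← ih, ← windowLaw_succ hR hrpos hrR]
    rfl

lemma windowLaw_one (hR : 0 < R) (hrpos : ∀ k, 0 < r k) (hrR : ∀ k, r k ≤ R) (hRT : R ≤ T) :
    windowLaw r pk init hRT 1 = windowMatrix d n R hR r hrpos pk ^ (T - R) *ᵥ init := by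
  conv_rhs => rw [← windowLaw_self (r := r) (pk := pk) (init := init)]
  exact windowLaw_take hR hrpos hrR le_rfl hRT 1

lemma windowLaw_lastToken (hR : 0 < R) (hRT : R ≤ T) (g : Fin d → ℝ) (Z : Fin R → Fin d) :
    windowLaw r pk init hRT (fun x => g (lastToken (hR.trans_le hRT) x)) Z =
      g (lastToken hR Z) * windowLaw r pk init hRT 1 Z := by
  simp only [windowLaw, ← pushforward_mul_comp (lastWindow hRT) (fun Z => g (lastToken hR Z)),
    lastToken_lastWindow, Pi.one_apply, mul_one, mul_comm]

lemma sum_ngramProb_mul_take (hR : 0 < R) (hrpos : ∀ k, 0 < r k) (hrR : ∀ k, r k ≤ R)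
    (hpk0 : ∀ Y e, 0 ≤ pk Y e) (hpk1 : ∀ Y, ∑ e, pk Y e = 1) (hRT : R ≤ T) {T' : ℕ} (hT : T ≤ T')
    (F : (Fin T → Fin d) → ℝ) :
    ∑ y, ngramProb d n R T' r pk init (hRT.trans hT) y * F (Fin.take T hT y) =
      ∑ x, ngramProb d n R T r pk init hRT x * F x := by
  rw [← sum_windowLaw, ← sum_windowLaw, windowLaw_take hR hrpos hrR hRT hT]
  exact sum_mulVec_of_mem_colStochastic
    (pow_mem (windowMatrix_mem_colStochastic hR hrpos hrR hpk0 hpk1) _)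

lemma ngramProb_nonneg (hpk0 : ∀ Y e, 0 ≤ pk Y e) (hinit : ∀ Z, 0 ≤ init Z) (hRT : R ≤ T)
    (x : Fin T → Fin d) : 0 ≤ ngramProb d n R T r pk init hRT x :=
  mul_nonneg (hinit _) (prod_nonneg fun _ _ => hpk0 _ _)

lemma sum_ngramProb (hR : 0 < R) (hrpos : ∀ k, 0 < r k) (hrR : ∀ k, r k ≤ R)
    (hpk0 : ∀ Y e, 0 ≤ pk Y e) (hpk1 : ∀ Y, ∑ e, pk Y e = 1) (hRT : R ≤ T) :
    ∑ x, ngramProb d n R T r pk init hRT x = ∑ Z, init Z := by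
  have marginal := sum_ngramProb_mul_take (init := init) hR hrpos hrR hpk0 hpk1 le_rfl hRT 1
  simpa [ngramProb_self] using marginal

lemma sum_ngramProb_mul_mul (hR : 0 < R) (hrpos : ∀ k, 0 < r k) (hrR : ∀ k, r k ≤ R)
    (hpk0 : ∀ Y e, 0 ≤ pk Y e) (hpk1 : ∀ Y, ∑ e, pk Y e = 1) {l m : ℕ} (hl : R ≤ l + 1)
    (hlm : l ≤ m) (hm : m < T) (g h : Fin d → ℝ) :
    ∑ x, ngramProb d n R T r pk init ((hl.trans (Nat.succ_le_succ hlm)).trans hm) x *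
        (g (x ⟨l, hlm.trans_lt hm⟩) * h (x ⟨m, hm⟩)) =
      ∑ Z, h (lastToken hR Z) * (windowMatrix d n R hR r hrpos pk ^ (m - l) *ᵥ fun Z =>
        g (lastToken hR Z) * (windowMatrix d n R hR r hrpos pk ^ (l + 1 - R) *ᵥ init) Z) Z := by
  have hlm' : l + 1 ≤ m + 1 := Nat.succ_le_succ hlm
  have law_at_l : windowLaw r pk init hl (fun x => g (lastToken l.succ_pos x)) = fun Z =>
      g (lastToken hR Z) * (windowMatrix d n R hR r hrpos pk ^ (l + 1 - R) *ᵥ init) Z := by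
    ext Z
    rw [windowLaw_lastToken hR, windowLaw_one hR hrpos hrR]
  calc _ = ∑ y, ngramProb d n R (m + 1) r pk init (hl.trans hlm') y *
          (g (lastToken l.succ_pos (Fin.take (l + 1) hlm' y)) * h (lastToken m.succ_pos y)) :=
        sum_ngramProb_mul_take hR hrpos hrR hpk0 hpk1 (hl.trans hlm') hm fun y =>
          g (lastToken l.succ_pos (Fin.take (l + 1) hlm' y)) * h (lastToken m.succ_pos y)
    _ = ∑ Z, h (lastToken hR Z) * windowLaw r pk init (hl.trans hlm')
          (fun y => g (lastToken l.succ_pos (Fin.take (l + 1) hlm' y))) Z := by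
        rw [windowLaw, sum_mul_pushforward (lastWindow _) fun Z => h (lastToken hR Z)]
        simp only [lastToken_lastWindow, mul_comm (h _), mul_assoc]
    _ = _ := by
        rw [windowLaw_take hR hrpos hrR hl hlm' fun x => g (lastToken l.succ_pos x), law_at_l,
          Nat.succ_sub_succ]

lemma windowMatrix_hasChiSqGap (hR : 0 < R) (hrpos : ∀ k, 0 < r k) (hrR : ∀ k, r k ≤ R)
    (hpk0 : ∀ Y e, 0 ≤ pk Y e) (hpk1 : ∀ Y, ∑ e, pk Y e = 1) {μ : (Fin R → Fin d) → ℝ}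
    (hμpos : ∀ Z, 0 < μ Z) (hμ1 : ∑ Z, μ Z = 1)
    (hstat : ∀ Z', μ Z' = ∑ Z, windowMatrix d n R hR r hrpos pk Z' Z * μ Z)
    {lam : ℝ} (hlam0 : 0 ≤ lam)
    (hop : ∀ v : (Fin R → Fin d) → ℝ,
      √(∑ Z', (specA d n R hR r hrpos pk μ *ᵥ v) Z' ^ 2) ≤ lam * √(∑ Z, v Z ^ 2)) :
    HasChiSqGap (windowMatrix d n R hR r hrpos pk) μ lam where
  mem_colStochastic := windowMatrix_mem_colStochastic hR hrpos hrR hpk0 hpk1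
  pos := hμpos
  sum_eq_one := hμ1
  stationary := funext fun Z' => (hstat Z').symm
  nonneg := hlam0
  contracts _ hw := chiNormSq_mulVec_le_of_opNorm_le hμpos hop hw

lemma tokenMarg_ngramProb_of_stationary (hR : 0 < R) (hrpos : ∀ k, 0 < r k) (hrR : ∀ k, r k ≤ R)
    {μ : (Fin R → Fin d) → ℝ} (hstat : windowMatrix d n R hR r hrpos pk *ᵥ μ = μ) {M : ℕ}
    (hRM : R ≤ M + 1) :
    tokenMarg d M (ngramProb d n R (M + 1) r pk μ hRM) = pushforward (lastToken hR) μ := by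
  have law_eq (t : ℕ) : windowMatrix d n R hR r hrpos pk ^ t *ᵥ μ = μ := by
    induction t with
    | zero => simp
    | succ t ih => rw [pow_succ, ← mulVec_mulVec, hstat, ih]
  calc tokenMarg d M (ngramProb d n R (M + 1) r pk μ hRM)
    _ = pushforward (lastToken hR) (windowLaw r pk μ hRM 1) := by
        simp only [windowLaw, pushforward_pushforward, Pi.one_apply, mul_one]
        exact congrArg (pushforward · _) (funext fun y => (lastToken_lastWindow hR hRM y).symm)
    _ = pushforward (lastToken hR) μ := by rw [windowLaw_one hR hrpos hrR, law_eq]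

lemma le_tokenMarg_ngramProb (hR : 0 < R) (hrpos : ∀ k, 0 < r k) (hrR : ∀ k, r k ≤ R)
    (hpk0 : ∀ Y e, 0 ≤ pk Y e) (hpk1 : ∀ Y, ∑ e, pk Y e = 1) (hinit : ∀ Z, 0 ≤ init Z)
    (hinit1 : ∑ Z, init Z = 1) {γ : ℝ} (hpkγ : ∀ Y e, γ ≤ pk Y e) {M : ℕ} (hRM : R ≤ M)
    (e : Fin d) : γ ≤ tokenMarg d M (ngramProb d n R (M + 1) r pk init (hRM.trans M.le_succ)) e :=
  calc γ = ∑ x, ngramProb d n R M r pk init hRM x * γ := by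
        rw [← sum_mul, sum_ngramProb hR hrpos hrR hpk0 hpk1, hinit1, one_mul]
    _ ≤ ∑ x, ngramProb d n R M r pk init hRM x *
          pk (parentTokens (hR.trans_le hRM) hrpos x) e := by
        gcongr
        · exact ngramProb_nonneg hpk0 hinit hRM _
        · exact hpkγ _ _
    _ = ∑ y, ngramProb d n R (M + 1) r pk init (hRM.trans M.le_succ) y *
          if y (Fin.last M) = e then 1 else 0 := by
        rw [sum_ngramProb_succ_mul hR hrpos hRM fun y => if y (Fin.last M) = e then 1 else 0]
        simp
    _ = _ := by
        simp only [mul_ite, mul_one, mul_zero]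
        rfl

lemma sum_ngramProb_mul_sum_empFreq_sub_sq_le (hR : 0 < R) (hrpos : ∀ k, 0 < r k)
    (hrR : ∀ k, r k ≤ R) (hpk0 : ∀ Y e, 0 ≤ pk Y e) (hpk1 : ∀ Y, ∑ e, pk Y e = 1)
    {μ : (Fin R → Fin d) → ℝ} {lam : ℝ}
    (hgap : HasChiSqGap (windowMatrix d n R hR r hrpos pk) μ lam) (hlam1 : lam < 1)
    (hinit1 : ∑ Z, init Z = 1) {M L : ℕ} (hRM : R ≤ M) (hML : M < L) :
    ∑ x, ngramProb d n R (L + 1) r pk init (by omega) x *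
        ∑ k, (empFreq (Ico M L).attach (fun l => x ⟨l, icoLtSucc l⟩) k -
          pushforward (lastToken hR) μ k) ^ 2 ≤
      4 * √(chiSq init μ + 1) / ((1 - lam) * (L - M)) := by
  have decay (l m : Ico M L) (hlm : l ≤ m) : ∑ k, ∑ x,
      ngramProb d n R (L + 1) r pk init (by omega) x *
        (centeredIndicator (pushforward (lastToken hR) μ) k (x ⟨l, icoLtSucc l⟩) *
          centeredIndicator (pushforward (lastToken hR) μ) k (x ⟨m, icoLtSucc m⟩)) ≤
        lam ^ (m.1 - l.1) * (2 * √(chiSq init μ + 1)) := by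
    have hRl : R ≤ l + 1 := hRM.trans ((mem_Ico.1 l.2).1.trans l.1.le_succ)
    simp only [sum_ngramProb_mul_mul hR hrpos hrR hpk0 hpk1 hRl hlm (icoLtSucc m)]
    refine ((hgap.pow (m.1 - l.1)).sum_correlation_le (lastToken hR) _).trans ?_
    have := pow_nonneg hgap.nonneg (m.1 - l.1)
    gcongr
    exact (hgap.pow _).chiNormSq_mulVec_le (pow_le_one₀ hgap.nonneg hlam1.le) hinit1
  have card_eq : (#(Ico M L) : ℝ) = L - M := by rw [Nat.card_Ico, Nat.cast_sub hML.le]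
  refine (sum_mul_sum_empFreq_sub_sq_le (nonempty_Ico.2 hML) _ _ _ hgap.nonneg hlam1
    (mul_nonneg zero_le_two (Real.sqrt_nonneg _)) decay).trans_eq ?_
  rw [card_eq]
  ring

end NGramChain

lemma sqrt_four_mul_div_le {D a N L : ℝ} (hD : 0 ≤ D) (ha : 0 < a) (hL : 0 < L)
    (hLN : L ≤ 2 * N) : √(4 * D / (a * N)) ≤ 4 * ((√a)⁻¹ * √D) / √L := by
  refine Real.sqrt_le_iff.2 ⟨by positivity, ?_⟩
  have square : (4 * ((√a)⁻¹ * √D) / √L) ^ 2 = 4 * D / (a * (L / 4)) := by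
    rw [div_pow, mul_pow, mul_pow, inv_pow, Real.sq_sqrt ha.le, Real.sq_sqrt hD, Real.sq_sqrt hL.le]
    field_simp
  rw [square]
  gcongr
  linarith

lemma div_mul_sqrt_four_mul_div_sub_le {D a γ C ε L M : ℝ} (hD : 0 ≤ D) (ha : 0 < a) (hγ : 0 < γ)
    (hC : 0 ≤ C) (hε : 0 ≤ ε) (hL : 0 < L) (hML : 2 * M ≤ L) :
    C / γ * √(4 * D / (a * (L - M))) ≤
      4 * C * ((√a)⁻¹ * √D + 2 * √M) / (√L * γ) + C * γ⁻¹ * ε :=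
  calc C / γ * √(4 * D / (a * (L - M))) ≤ C / γ * (4 * ((√a)⁻¹ * √D) / √L) := by
        gcongr
        exact sqrt_four_mul_div_le hD ha hL (by linarith)
    _ = 4 * C * ((√a)⁻¹ * √D) / (√L * γ) := by field_simp
    _ ≤ 4 * C * ((√a)⁻¹ * √D + 2 * √M) / (√L * γ) := by
        gcongr
        exact le_add_of_nonneg_right (by positivity)
    _ ≤ _ := le_add_of_nonneg_right (by positivity)

theorem statement12_general
    (d n R M L : ℕ) (hR : 0 < R)
    (r : Fin n → ℕ) (hrpos : ∀ i, 0 < r i) (hrR : ∀ i, r i ≤ R)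
    (pk : (Fin n → Fin d) → Fin d → ℝ)
    (hpk0 : ∀ Y e, 0 ≤ pk Y e) (hpk1 : ∀ Y, ∑ e, pk Y e = 1)
    (μ0 : (Fin R → Fin d) → ℝ) (hμ00 : ∀ Z, 0 ≤ μ0 Z) (hμ01 : ∑ Z, μ0 Z = 1)
    (μ : (Fin R → Fin d) → ℝ) (hμpos : ∀ Z, 0 < μ Z) (hμ1 : ∑ Z, μ Z = 1)
    (hstat : ∀ Z', μ Z' = ∑ Z, windowMatrix d n R hR r hrpos pk Z' Z * μ Z)
    (lam : ℝ) (hlam0 : 0 ≤ lam) (hlam1 : lam < 1)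
    (hop : ∀ v : (Fin R → Fin d) → ℝ,
      √(∑ Z', Matrix.mulVec (specA d n R hR r hrpos pk μ) v Z' ^ 2) ≤ lam * √(∑ Z, v Z ^ 2))
    (hRM : R ≤ M) (hML : M < L)
    (γ : ℝ) (hγ : 0 < γ)
    (hqγ : ∀ e, γ ≤ tokenMarg d M (ngramProb d n R (M + 1) r pk μ (by omega)) e)
    (ε C : ℝ) (hε : 0 < ε) (hC : 0 ≤ C)
    (f : (Fin (L + 1) → Fin d) → ℝ) (hf : ∀ x, |f x| ≤ C) :
    let p := ngramProb d n R (L + 1) r pk μ0 (by omega);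
    let q : Fin d → ℝ := tokenMarg d M (ngramProb d n R (M + 1) r pk μ (by omega));
    let ybar : (Fin (L + 1) → Fin d) → Fin d → ℝ := fun x k =>
      (∑ l ∈ (Finset.Ico M L).attach, (if x ⟨l.1, icoLtSucc l⟩ = k then (1 : ℝ) else 0)) /
        ((L : ℝ) - M);
    let A := ∑ x : Fin (L + 1) → Fin d, p x *
      ((∑ l ∈ (Finset.Ico M L).attach,
          (∑ k : Fin d,
            ((if x ⟨L, Nat.lt_succ_self L⟩ = k ∧ x ⟨l.1, icoLtSucc l⟩ = k then (1 : ℝ) else 0) /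
                (ybar x k + ε) -
              ybar x k * (if x ⟨L, Nat.lt_succ_self L⟩ = k then (1 : ℝ) else 0) /
                (ybar x k + ε))) * f x) /
        ((L : ℝ) - M));
    let B := ∑ x : Fin (L + 1) → Fin d, p x *
      ((∑ l ∈ (Finset.Ico M L).attach,
          ((∑ k : Fin d,
            (if x ⟨L, Nat.lt_succ_self L⟩ = k ∧ x ⟨l.1, icoLtSucc l⟩ = k then (1 : ℝ) else 0) /
              q k) - 1) * f x) /
        ((L : ℝ) - M));
    |A - B| ≤ C / γ * √(4 * √(chiSq μ0 μ + 1) / ((1 - lam) * (L - M))) := by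
  intro p q ybar A B
  have card_eq : (L : ℝ) - M = #(Ico M L).attach := by
    rw [card_attach, Nat.card_Ico, Nat.cast_sub hML.le]
  have ybar_eq (x : Fin (L + 1) → Fin d) :
      ybar x = empFreq (Ico M L).attach fun l => x ⟨l, icoLtSucc l⟩ := by
    ext k
    simp only [ybar, empFreq, card_eq]
  have A_eq_zero : A = 0 := sum_eq_zero fun x _ => by
    simp only [ybar_eq, ← sum_mul]
    rw [sum_sum_indicator_sub_empFreq_div_eq_zero, zero_mul, zero_div, mul_zero]
  have hgap := windowMatrix_hasChiSqGap hR hrpos hrR hpk0 hpk1 hμpos hμ1 hstat hlam0 hop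
  have q_eq : q = pushforward (lastToken hR) μ :=
    tokenMarg_ngramProb_of_stationary hR hrpos hrR hgap.stationary _
  have hp1 : ∑ x, p x = 1 := (sum_ngramProb hR hrpos hrR hpk0 hpk1 _).trans hμ01
  rw [A_eq_zero, zero_sub, abs_neg]
  calc |B|
    _ ≤ C / γ * √(∑ x, p x * ∑ k,
          (empFreq (Ico M L).attach (fun l => x ⟨l, icoLtSucc l⟩) k - q k) ^ 2) := by
        simp only [B, card_eq]
        exact abs_sum_mul_sum_likelihoodRatio_sub_one_le
          (attach_nonempty_iff.2 (nonempty_Ico.2 hML)) (ngramProb_nonneg hpk0 hμ00 _) hp1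
          (fun x => x ⟨L, L.lt_succ_self⟩) (fun x l => x ⟨l, icoLtSucc l⟩) hγ hC hqγ hf
    _ ≤ C / γ * √(4 * √(chiSq μ0 μ + 1) / ((1 - lam) * (L - M))) := by
        rw [q_eq]
        gcongr
        exact sum_ngramProb_mul_sum_empFreq_sub_sq_le hR hrpos hrR hpk0 hpk1 hgap hlam1 hμ01 hRM hML

/-- Replacing the empirical token frequency `ȳ` (plus the smoothing `ε`) by
the stationary single-token marginal `q` incurs an error of at most
`4C((1−λ)^{-1/2}(D₀+1)^{1/4} + 2√M)/(√L·γ) + Cγ⁻¹ε` in the gradient-type expectation. -/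
theorem statement12
    (d n R M L : ℕ) (hd : 0 < d) (hn : 0 < n) (hR : 0 < R)
    (r : Fin n → ℕ) (hrpos : ∀ i, 0 < r i) (hrmono : StrictMono r)
    (hrR : ∀ i, r i ≤ R) (hRmax : ∃ i, r i = R)
    (pk : (Fin n → Fin d) → Fin d → ℝ)
    (hpk0 : ∀ Y e, 0 ≤ pk Y e) (hpk1 : ∀ Y, ∑ e, pk Y e = 1)
    (μ0 : (Fin R → Fin d) → ℝ) (hμ00 : ∀ Z, 0 ≤ μ0 Z) (hμ01 : ∑ Z, μ0 Z = 1)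
    (μ : (Fin R → Fin d) → ℝ) (hμpos : ∀ Z, 0 < μ Z) (hμ1 : ∑ Z, μ Z = 1)
    (hstat : ∀ Z', μ Z' = ∑ Z, windowMatrix d n R hR r hrpos pk Z' Z * μ Z)
    (lam : ℝ) (hlam0 : 0 ≤ lam) (hlam1 : lam < 1)
    (hop : ∀ v : (Fin R → Fin d) → ℝ,
      Real.sqrt (∑ Z', Matrix.mulVec (specA d n R hR r hrpos pk μ) v Z' ^ 2)
        ≤ lam * Real.sqrt (∑ Z, v Z ^ 2))
    (γ : ℝ) (hγ : 0 < γ) (hpkγ : ∀ Y e, γ ≤ pk Y e)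
    (hRM : R ≤ M) (hML : 2 * M ≤ L) (hML1 : M + 1 ≤ L)
    (ε C : ℝ) (hε : 0 < ε) (hC : 0 < C)
    (f : (Fin (L + 1) → Fin d) → ℝ) (hf : ∀ x, |f x| ≤ C) :
    let p := ngramProb d n R (L + 1) r pk μ0 (by omega);
    let q : Fin d → ℝ := tokenMarg d M (ngramProb d n R (M + 1) r pk μ (by omega));
    let ybar : (Fin (L + 1) → Fin d) → Fin d → ℝ := fun x k =>
      (∑ l ∈ (Finset.Ico M L).attach, (if x ⟨l.1, icoLtSucc l⟩ = k then (1 : ℝ) else 0)) /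
        ((L : ℝ) - M);
    let A := ∑ x : Fin (L + 1) → Fin d, p x *
      ((∑ l ∈ (Finset.Ico M L).attach,
          (∑ k : Fin d,
            ((if x ⟨L, Nat.lt_succ_self L⟩ = k ∧ x ⟨l.1, icoLtSucc l⟩ = k then (1 : ℝ) else 0) /
                (ybar x k + ε) -
              ybar x k * (if x ⟨L, Nat.lt_succ_self L⟩ = k then (1 : ℝ) else 0) /
                (ybar x k + ε))) * f x) /
        ((L : ℝ) - M));
    let B := ∑ x : Fin (L + 1) → Fin d, p x *
      ((∑ l ∈ (Finset.Ico M L).attach,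
          ((∑ k : Fin d,
            (if x ⟨L, Nat.lt_succ_self L⟩ = k ∧ x ⟨l.1, icoLtSucc l⟩ = k then (1 : ℝ) else 0) /
              q k) - 1) * f x) /
        ((L : ℝ) - M));
    |A - B| ≤
      4 * C * ((Real.sqrt (1 - lam))⁻¹ * Real.sqrt (Real.sqrt (chiSq μ0 μ + 1)) +
          2 * Real.sqrt M) / (Real.sqrt L * γ) +
        C * γ⁻¹ * ε :=
  (statement12_general d n R M L hR r hrpos hrR pk hpk0 hpk1 μ0 hμ00 hμ01 μ hμpos hμ1 hstat lam
    hlam0 hlam1 hop hRM hML1 γ hγ (le_tokenMarg_ngramProb hR hrpos hrR hpk0 hpk1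
      (fun Z => (hμpos Z).le) hμ1 hpkγ hRM) ε C hε hC.le f hf).trans <|
    div_mul_sqrt_four_mul_div_sub_le (Real.sqrt_nonneg _) (sub_pos.2 hlam1) hγ hC.le hε.le
      (Nat.cast_pos.2 (M.succ_pos.trans_le hML1)) (mod_cast hML)
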